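/- Let X be a compact Hausdorff space and let ξ and η be topological real vector bundles of finite rank over X, with η equipped with a fiberwise inner product whose norm is continuous on the total space. For a vector bundle ζ over a space, let Th(ζ) denote the one-point compactification of its total space. The zero section of η induces a closed embedding z : Th(ξ) → Th(ξ ⊕ η), and the quotient Th(ξ ⊕ η)/Th(ξ), obtained by collapsing the image of z to the point at infinity, is homeomorphic to Th(ℝ ⊕ ξ|_{S(η)}), the one-point compactification of the total space of the bundle ℝ ⊕ (pullback of ξ) over the unit sphere bundle S(η) of η. -/

import Mathlib

/-!
# The cofibre of `Th(ξ) → Th(ξ ⊕ η)`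

Radial coordinates identify the complement of `ξ` in the total space of `ξ ⊕ η` with the total
space of `ℝ ⊕ ξ|_{S(η)}`: the point `(v, t, w)` with `‖v‖ = 1` corresponds to `(w, eᵗ v)`
(`polarHomeomorph`). The total space of `ξ ⊕ η` is open in `Th(ξ ⊕ η)`, so this gives an open
embedding of the total space of `ℝ ⊕ ξ|_{S(η)}` into `Th(ξ ⊕ η)`, whose range is the complement of
the image of `Th(ξ)`.

The statement then follows from a general fact (`nonempty_collapse_homeomorph`): if `j : S → Y` is
an open embedding into a compact Hausdorff space that is not surjective, collapsing the complement
of its range gives the one-point compactification of `S`. Local triviality makes the total spaces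
Hausdorff and locally compact, which is what makes the Thom spaces Hausdorff.
-/

open Bundle OnePoint

/-- The setoid collapsing a subset `A` to a single point. -/
def collapseSetoid {α : Type*} (A : Set α) : Setoid α where
  r p q := p = q ∨ (p ∈ A ∧ q ∈ A)
  iseqv := by
    constructor
    · intro x; exact Or.inl rfl
    · rintro x y (rfl | ⟨hx, hy⟩)
      · exact Or.inl rfl
      · exact Or.inr ⟨hy, hx⟩
    · rintro x y z (rfl | ⟨hx, hy⟩) (rfl | ⟨hy', hz⟩)
      · exact Or.inl rfl
      · exact Or.inr ⟨hy', hz⟩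
      · exact Or.inr ⟨hx, hy⟩
      · exact Or.inr ⟨hx, hz⟩

/-! ### Collapsing the complement of an open subspace -/

/-- The collapse map sends `j s` to `s` and everything else to `∞`. It is continuous because a
compact subset of `S` has compact, hence closed, image in `Y`; being a continuous surjection from a
compact space to a Hausdorff space, it is a quotient map. -/
theorem nonempty_collapse_homeomorph {Y S : Type*} [TopologicalSpace Y] [CompactSpace Y] [T2Space Y]
    [TopologicalSpace S] {j : S → Y} (hj : Topology.IsOpenEmbedding j) {A : Set Y}
    (hA : A = (Set.range j)ᶜ) (hne : A.Nonempty) :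
    Nonempty (Quotient (collapseSetoid A) ≃ₜ OnePoint S) := by
  classical
  have : T2Space S := hj.isEmbedding.t2Space
  have : LocallyCompactSpace S := hj.locallyCompactSpace
  let f : Y → OnePoint S := fun y => if h : ∃ s, j s = y then ((h.choose : S) : OnePoint S) else ∞
  have hfj : ∀ s, f (j s) = s := fun s => by
    have h : ∃ s', j s' = j s := ⟨s, rfl⟩
    simp only [f, dif_pos h, OnePoint.coe_eq_coe]
    exact hj.injective h.choose_spec
  have hfA : ∀ y, y ∈ A → f y = ∞ := fun y hy => by
    rw [hA] at hy
    exact dif_neg hy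
  have hcases : ∀ y, y ∈ A ∨ ∃ s, j s = y := fun y => by
    rw [hA]
    exact (em (y ∈ Set.range j)).symm
  have hjA : ∀ s, j s ∉ A := fun s => by simp [hA]
  have hf : Continuous f := by
    refine continuous_def.2 fun U hU => ?_
    by_cases hi : ∞ ∈ U
    · have hK := ((OnePoint.isOpen_iff_of_mem hi).1 hU).2
      have : f ⁻¹' U = (j '' ((↑) ⁻¹' U : Set S)ᶜ)ᶜ := by
        ext y
        rcases hcases y with hy | ⟨s, rfl⟩
        · have : ∀ s, j s ≠ y := by rintro s rfl; exact hjA s hy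
          simp [hfA y hy, hi, this]
        · simp [hfj, hj.injective.eq_iff]
      rw [this]
      exact (hK.image hj.continuous).isClosed.isOpen_compl
    · have : f ⁻¹' U = j '' ((↑) ⁻¹' U : Set S) := by
        ext y
        rcases hcases y with hy | ⟨s, rfl⟩
        · have : ∀ s, j s ≠ y := by rintro s rfl; exact hjA s hy
          simp [hfA y hy, hi, this]
        · simp [hfj, hj.injective.eq_iff]
      rw [this]
      exact hj.isOpenMap _ (hU.preimage OnePoint.continuous_coe)
  have hsurj : Function.Surjective f := by
    intro p
    induction p using OnePoint.rec with
    | infty => exact hne.imp fun y hy => hfA y hy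
    | coe s => exact ⟨j s, hfj s⟩
  have hker : collapseSetoid A = Setoid.ker f := by
    ext p q
    change (p = q ∨ (p ∈ A ∧ q ∈ A)) ↔ f p = f q
    rcases hcases p with hp | ⟨s, rfl⟩ <;> rcases hcases q with hq | ⟨t, rfl⟩
    · simp [hfA, hp, hq]
    · have : p ≠ j t := by rintro rfl; exact hjA t hp
      simp [hfA p hp, hfj, hjA, this]
    · have : j s ≠ q := by rintro rfl; exact hjA s hq
      simp [hfA q hq, hfj, hjA, this]
    · simp [hfj, hjA, hj.injective.eq_iff]
  rw [hker]
  exact ⟨Topology.IsQuotientMap.homeomorph (f := ⟨f, hf⟩)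
    (hf.isClosedMap.isQuotientMap hf hsurj)⟩

/-! ### Topology of total spaces -/

section Bundles

variable {X F : Type*} {V : X → Type*} [TopologicalSpace X] [TopologicalSpace (TotalSpace F V)]

/-- Points over distinct base points are separated by the projection, points in the same fibre by
a trivialization. -/
theorem t2Space_totalSpace [TopologicalSpace F] [∀ x, TopologicalSpace (V x)] [FiberBundle F V]
    [T2Space X] [T2Space F] : T2Space (TotalSpace F V) := by
  refine t2Space_iff_disjoint_nhds.2 fun p q hpq => ?_
  by_cases h : p.proj = q.proj
  · let e := trivializationAt F V p.proj
    have hp : p ∈ e.source := e.mem_source.2 (FiberBundle.mem_baseSet_trivializationAt' p.proj)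
    have hq : q ∈ e.source :=
      e.mem_source.2 (h ▸ FiberBundle.mem_baseSet_trivializationAt' p.proj)
    exact (e.continuousAt hp).tendsto.disjoint
      (disjoint_nhds_nhds.2 fun he => hpq (e.injOn hp hq he)) (e.continuousAt hq).tendsto
  · have hc := FiberBundle.continuous_proj F V
    exact (hc.tendsto p).disjoint (disjoint_nhds_nhds.2 h) (hc.tendsto q)

theorem locallyCompactSpace_totalSpace [TopologicalSpace F] [∀ x, TopologicalSpace (V x)]
    [FiberBundle F V] [LocallyCompactSpace X] [LocallyCompactSpace F] :
    LocallyCompactSpace (TotalSpace F V) :=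
  ChartedSpace.locallyCompactSpace (X × F) (TotalSpace F V)

theorem continuous_totalSpace_smul [NormedAddCommGroup F] [NormedSpace ℝ F]
    [∀ x, AddCommGroup (V x)] [∀ x, Module ℝ (V x)] [∀ x, TopologicalSpace (V x)]
    [FiberBundle F V] [VectorBundle ℝ F V] {Y : Type*} [TopologicalSpace Y]
    {f : Y → ℝ} {g : Y → TotalSpace F V} (hf : Continuous f) (hg : Continuous g) :
    Continuous fun y => (⟨(g y).proj, f y • (g y).snd⟩ : TotalSpace F V) := by
  refine continuous_iff_continuousAt.2 fun y₀ => ?_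
  rw [FiberBundle.continuousAt_totalSpace]
  have hproj : Continuous fun y => (g y).proj := (FiberBundle.continuous_proj F V).comp hg
  refine ⟨hproj.continuousAt, ?_⟩
  let e := trivializationAt F V (g y₀).proj
  have hb := FiberBundle.mem_baseSet_trivializationAt F V (g y₀).proj
  have h₁ : ContinuousAt (fun y => f y • (e (g y)).2) y₀ := by
    have h₂ : ContinuousAt (fun y => e (g y)) y₀ :=
      ContinuousAt.comp (f := g) (g := e) (e.continuousAt (e.mem_source.2 hb)) hg.continuousAt
    exact hf.continuousAt.smul h₂.snd
  refine h₁.congr ?_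
  filter_upwards [(e.open_baseSet.preimage hproj).mem_nhds hb] with y hy
  exact ((e.linear ℝ hy).map_smul (f y) (g y).snd).symm

end Bundles

section Prod

variable {F₁ F₂ X : Type*} {ξ η : X → Type*}
  [TopologicalSpace (TotalSpace F₁ ξ)] [TopologicalSpace (TotalSpace F₂ η)]

theorem continuous_prod_fst :
    Continuous fun p : TotalSpace (F₁ × F₂) (ξ ×ᵇ η) => (⟨p.proj, p.snd.1⟩ : TotalSpace F₁ ξ) :=
  continuous_fst.comp (FiberBundle.Prod.isInducing_diag F₁ ξ F₂ η).continuous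

theorem continuous_prod_snd :
    Continuous fun p : TotalSpace (F₁ × F₂) (ξ ×ᵇ η) => (⟨p.proj, p.snd.2⟩ : TotalSpace F₂ η) :=
  continuous_snd.comp (FiberBundle.Prod.isInducing_diag F₁ ξ F₂ η).continuous

theorem continuous_prod_mk {Y : Type*} [TopologicalSpace Y]
    {f : Y → TotalSpace (F₁ × F₂) (ξ ×ᵇ η)}
    (h₁ : Continuous fun y => (⟨(f y).proj, (f y).snd.1⟩ : TotalSpace F₁ ξ))
    (h₂ : Continuous fun y => (⟨(f y).proj, (f y).snd.2⟩ : TotalSpace F₂ η)) : Continuous f :=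
  (FiberBundle.Prod.isInducing_diag F₁ ξ F₂ η).continuous_iff.2 (h₁.prodMk h₂)

end Prod

/-! ### Polar coordinates on the complement of the zero section of `η` -/

section Polar

variable {F₁ F₂ X : Type*} {ξ η : X → Type*}

/-- The total space of `ℝ ⊕ ξ|_{S(η)}`, realized as the triples `(v, t, w)` with `‖v‖ = 1` and
`w` over the same base point as `v`. -/
abbrev SphereTotal (F₁ F₂ : Type*) {X : Type*} (ξ η : X → Type*)
    [∀ x, NormedAddCommGroup (η x)] : Type _ :=
  {q : TotalSpace F₂ η × ℝ × TotalSpace F₁ ξ // ‖q.1.snd‖ = 1 ∧ q.2.2.proj = q.1.proj}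

/-- The radial coordinate map `(v, t, w) ↦ (w, eᵗ v)`. -/
noncomputable def polarMap [∀ x, NormedAddCommGroup (η x)] [∀ x, InnerProductSpace ℝ (η x)]
    (q : SphereTotal F₁ F₂ ξ η) : TotalSpace (F₁ × F₂) (ξ ×ᵇ η) :=
  ⟨q.1.1.proj, (q.2.2 ▸ q.1.2.2.snd, Real.exp q.1.2.1 • q.1.1.snd)⟩

theorem polarMap_fst [∀ x, NormedAddCommGroup (η x)] [∀ x, InnerProductSpace ℝ (η x)]
    (q : SphereTotal F₁ F₂ ξ η) :
    (⟨(polarMap q).proj, (polarMap q).snd.1⟩ : TotalSpace F₁ ξ) = q.1.2.2 := by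
  obtain ⟨⟨⟨x, v⟩, t, ⟨y, w⟩⟩, h₁, h₂⟩ := q
  obtain rfl : y = x := h₂
  rfl

variable [TopologicalSpace X]
  [NormedAddCommGroup F₁] [NormedSpace ℝ F₁] [NormedAddCommGroup F₂] [NormedSpace ℝ F₂]
  [∀ x, AddCommGroup (ξ x)] [∀ x, Module ℝ (ξ x)] [∀ x, TopologicalSpace (ξ x)]
  [TopologicalSpace (TotalSpace F₁ ξ)]
  [∀ x, NormedAddCommGroup (η x)] [∀ x, InnerProductSpace ℝ (η x)]
  [TopologicalSpace (TotalSpace F₂ η)]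

/-- Radial coordinates: the total space of `ℝ ⊕ ξ|_{S(η)}` is homeomorphic, via
`(v, t, w) ↦ (w, eᵗ v)`, to the part of the total space of `ξ ⊕ η` where the `η`-component is
nonzero. The inverse is `(w, u) ↦ (u / ‖u‖, log ‖u‖, w)`. -/
noncomputable def polarHomeomorph [FiberBundle F₁ ξ] [FiberBundle F₂ η] [VectorBundle ℝ F₂ η]
    (hnorm : Continuous fun p : TotalSpace F₂ η => ‖p.snd‖) :
    SphereTotal F₁ F₂ ξ η ≃ₜ {p : TotalSpace (F₁ × F₂) (ξ ×ᵇ η) // ‖p.snd.2‖ ≠ 0} where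
  toFun q := ⟨polarMap q, by
    change ‖Real.exp q.1.2.1 • q.1.1.snd‖ ≠ 0
    rw [norm_smul, q.2.1, mul_one]
    exact norm_ne_zero_iff.2 (Real.exp_ne_zero _)⟩
  invFun p := ⟨(⟨p.1.proj, ‖p.1.snd.2‖⁻¹ • p.1.snd.2⟩, Real.log ‖p.1.snd.2‖,
    ⟨p.1.proj, p.1.snd.1⟩), by
      refine ⟨?_, rfl⟩
      change ‖‖p.1.snd.2‖⁻¹ • p.1.snd.2‖ = 1
      rw [norm_smul, norm_inv, norm_norm, inv_mul_cancel₀ p.2]⟩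
  left_inv := by
    rintro ⟨⟨⟨x, v⟩, t, ⟨y, w⟩⟩, h₁, h₂⟩
    obtain rfl : y = x := h₂
    have h₁ : ‖v‖ = 1 := h₁
    have h₃ : ‖Real.exp t • v‖ = Real.exp t := by simp [norm_smul, h₁]
    refine Subtype.ext ?_
    change ((⟨y, ‖Real.exp t • v‖⁻¹ • Real.exp t • v⟩ : TotalSpace F₂ η),
      Real.log ‖Real.exp t • v‖, (⟨y, w⟩ : TotalSpace F₁ ξ)) = _
    rw [h₃, inv_smul_smul₀ (Real.exp_ne_zero t), Real.log_exp]
  right_inv := by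
    rintro ⟨⟨x, w, u⟩, hu⟩
    have hu : ‖u‖ ≠ 0 := hu
    refine Subtype.ext ?_
    change (⟨x, (w, Real.exp (Real.log ‖u‖) • ‖u‖⁻¹ • u)⟩ :
      TotalSpace (F₁ × F₂) (ξ ×ᵇ η)) = ⟨x, (w, u)⟩
    rw [Real.exp_log (lt_of_le_of_ne (norm_nonneg u) hu.symm), smul_inv_smul₀ hu]
  continuous_toFun := by
    refine Continuous.subtype_mk (continuous_prod_mk ?_ ?_) _
    · simp only [polarMap_fst]
      fun_prop
    · exact continuous_totalSpace_smul (f := fun q : SphereTotal F₁ F₂ ξ η => Real.exp q.1.2.1)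
        (g := fun q => q.1.1) (by fun_prop) (by fun_prop)
  continuous_invFun := by
    have h₁ := (continuous_prod_fst (F₁ := F₁) (F₂ := F₂) (ξ := ξ) (η := η)).comp
      (continuous_subtype_val (p := fun p => ‖p.snd.2‖ ≠ 0))
    have h₂ := (continuous_prod_snd (F₁ := F₁) (F₂ := F₂) (ξ := ξ) (η := η)).comp
      (continuous_subtype_val (p := fun p => ‖p.snd.2‖ ≠ 0))
    have h₃ := hnorm.comp h₂
    refine Continuous.subtype_mk ?_ _
    exact (continuous_totalSpace_smul (h₃.inv₀ fun p => p.2) h₂).prodMk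
      ((h₃.log fun p => p.2).prodMk h₁)

end Polar

/-- Let `ξ, η` be vector bundles over a compact Hausdorff space `X`, with `η` metrized with
continuous norm, and write `Th(ζ)` for the one-point compactification of a total space.
The zero section of `η` induces a closed embedding `z : Th(ξ) → Th(ξ ⊕ η)`, and the quotient
of `Th(ξ ⊕ η)` collapsing the image of `z` to a point is homeomorphic to
`Th(ℝ ⊕ ξ|_{S(η)})`, the one-point compactification of the total space of the bundle
`ℝ ⊕ (pullback of ξ)` over the unit sphere bundle `S(η)`; the latter total space is realized
as the subspace `{(v, t, w) : ‖v‖ = 1, w over the same basepoint as v}` of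
`(total space of η) × ℝ × (total space of ξ)`. -/
theorem thom_space_cofibration
    (F₁ F₂ : Type*) [NormedAddCommGroup F₁] [NormedSpace ℝ F₁] [FiniteDimensional ℝ F₁]
    [NormedAddCommGroup F₂] [NormedSpace ℝ F₂] [FiniteDimensional ℝ F₂]
    (X : Type*) [TopologicalSpace X] [CompactSpace X] [T2Space X]
    (ξ : X → Type*) [∀ x, AddCommGroup (ξ x)] [∀ x, Module ℝ (ξ x)]
    [∀ x, TopologicalSpace (ξ x)]
    [TopologicalSpace (TotalSpace F₁ ξ)] [FiberBundle F₁ ξ] [VectorBundle ℝ F₁ ξ]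
    (η : X → Type*) [∀ x, NormedAddCommGroup (η x)] [∀ x, InnerProductSpace ℝ (η x)]
    [TopologicalSpace (TotalSpace F₂ η)] [FiberBundle F₂ η] [VectorBundle ℝ F₂ η]
    (hnorm : Continuous fun p : TotalSpace F₂ η => ‖p.snd‖) :
    ∃ z : OnePoint (TotalSpace F₁ ξ) → OnePoint (TotalSpace (F₁ × F₂) (ξ ×ᵇ η)),
      z ∞ = ∞ ∧
      (∀ q : TotalSpace F₁ ξ,
        z ↑q = ↑(⟨q.proj, (q.snd, 0)⟩ : TotalSpace (F₁ × F₂) (ξ ×ᵇ η))) ∧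
      Topology.IsClosedEmbedding z ∧
      Nonempty
        (Quotient (collapseSetoid (Set.range z)) ≃ₜ
          OnePoint {q : TotalSpace F₂ η × ℝ × TotalSpace F₁ ξ //
            ‖q.1.snd‖ = 1 ∧ q.2.2.proj = q.1.proj}) := by
  have : ProperSpace F₁ := FiniteDimensional.proper ℝ F₁
  have : ProperSpace F₂ := FiniteDimensional.proper ℝ F₂
  have : T2Space (TotalSpace F₁ ξ) := t2Space_totalSpace
  have : T2Space (TotalSpace (F₁ × F₂) (ξ ×ᵇ η)) := t2Space_totalSpace
  have : LocallyCompactSpace (TotalSpace (F₁ × F₂) (ξ ×ᵇ η)) := locallyCompactSpace_totalSpace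
  let i : TotalSpace F₁ ξ → TotalSpace (F₁ × F₂) (ξ ×ᵇ η) := fun q => ⟨q.proj, (q.snd, 0)⟩
  have hi : Continuous i := continuous_prod_mk continuous_id
    ((Bundle.Trivialization.continuous_zeroSection (F := F₂) (E := η) ℝ).comp (FiberBundle.continuous_proj F₁ ξ))
  -- The projection to `ξ` is a continuous left inverse of `i`.
  have hic : Topology.IsClosedEmbedding i :=
    Function.LeftInverse.isClosedEmbedding (fun _ => rfl) continuous_prod_fst hi
  have hz : Continuous (OnePoint.map i) := by
    refine OnePoint.continuous_map hi ?_
    rw [Filter.coclosedCompact_eq_cocompact, Filter.coclosedCompact_eq_cocompact]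
    exact hic.tendsto_cocompact
  refine ⟨OnePoint.map i, rfl, fun _ => rfl,
    hz.isClosedEmbedding (Option.map_injective hic.injective), ?_⟩
  have hopen : IsOpen {p : TotalSpace (F₁ × F₂) (ξ ×ᵇ η) | ‖p.snd.2‖ ≠ 0} :=
    isOpen_ne_fun (hnorm.comp continuous_prod_snd) continuous_const
  refine nonempty_collapse_homeomorph
    (j := fun q => ((polarHomeomorph hnorm q).1 : OnePoint (TotalSpace (F₁ × F₂) (ξ ×ᵇ η))))
    (OnePoint.isOpenEmbedding_coe.comp
      (hopen.isOpenEmbedding_subtypeVal.comp (polarHomeomorph hnorm).isOpenEmbedding)) ?_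
    (Set.range_nonempty _)
  -- The points of `Th(ξ ⊕ η)` outside the image of `z` are those with nonzero `η`-component.
  ext p
  induction p using OnePoint.rec with
  | infty => exact iff_of_true ⟨∞, rfl⟩ fun ⟨_, h⟩ => OnePoint.coe_ne_infty _ h
  | coe p =>
    constructor
    · rintro ⟨r, hr⟩ ⟨q, hq⟩
      have hq : (polarHomeomorph hnorm q).1 = p := OnePoint.coe_injective hq
      have hne := (polarHomeomorph hnorm q).2
      induction r using OnePoint.rec with
      | infty => exact OnePoint.infty_ne_coe _ hr
      | coe r =>
        have hr : i r = p := OnePoint.coe_injective hr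
        rw [hq, ← hr] at hne
        exact hne norm_zero
    · intro h
      have hp : ‖p.snd.2‖ = 0 := by
        by_contra hp
        refine h ⟨(polarHomeomorph hnorm).symm ⟨p, hp⟩, ?_⟩
        simp only [Homeomorph.apply_symm_apply]
      obtain ⟨x, w, u⟩ := p
      obtain rfl : u = 0 := norm_eq_zero.1 hp
      exact ⟨((⟨x, w⟩ : TotalSpace F₁ ξ) : OnePoint _), rfl⟩
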